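/- Let d ≥ 4 and let a_1,…,a_d ∈ F_q∖{0} be such that a_1+⋯+a_d = 0. Then there exists c_q < q such that for all sufficiently large n, every set A ⊆ F_q^n with |A| > c_q^n contains pairwise distinct elements x_1,…,x_d satisfying a_1x_1 + a_2x_2 + ⋯ + a_dx_d = 0. -/

import Mathlib

open Finset in
lemma exists_large_support {F B : Type*} [Field F] [Fintype B] [DecidableEq B] [DecidableEq F]
    (V : Submodule F (B → F)) :
    ∃ u ∈ V, Module.finrank F V ≤ #{x | u x ≠ 0} := by
  classical
  by_contra hcon
  push Not at hcon
  obtain ⟨k, hk⟩ : ∃ k, ∃ u ∈ V, #{x | u x ≠ 0} = k ∧ ∀ v ∈ V, #{x | v x ≠ 0} ≤ k := by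
    have hb : ∃ k, ∃ u ∈ V, #{x | u x ≠ 0} = k := ⟨_, 0, V.zero_mem, rfl⟩
    have hbd : ∀ k, (∃ u ∈ V, #{x | u x ≠ 0} = k) → k ≤ Fintype.card B := by
      rintro k ⟨u, -, rfl⟩
      exact card_le_univ _
    obtain ⟨k0, hk0⟩ := hb
    have h1 := Nat.findGreatest_spec (P := fun k => ∃ u ∈ V, #{x | u x ≠ 0} = k) (hbd _ hk0) hk0
    obtain ⟨u, hu, hu2⟩ := h1
    refine ⟨_, u, hu, hu2, fun v hv => ?_⟩
    exact Nat.le_findGreatest (hbd _ ⟨v, hv, rfl⟩) ⟨v, hv, rfl⟩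
  obtain ⟨u, hu, huk, hmax⟩ := hk
  have hlt := hcon u hu
  let S := {x : B // u x ≠ 0}
  let L : V →ₗ[F] (S → F) := (LinearMap.funLeft F F (Subtype.val : S → B)).comp V.subtype
  have hS : Module.finrank F (S → F) < Module.finrank F V := by
    rw [Module.finrank_pi]
    simpa [S, Fintype.card_subtype] using hlt
  have hker := LinearMap.ker_ne_bot_of_finrank_lt (f := L) hS
  obtain ⟨v, hv, hv0⟩ := Submodule.exists_mem_ne_zero_of_ne_bot hker
  have hv1 : ∀ x, u x ≠ 0 → (v : B → F) x = 0 := by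
    intro x hx
    have := congrFun (LinearMap.mem_ker.1 hv) ⟨x, hx⟩
    simpa [L, LinearMap.funLeft] using this
  have hv2 : ∃ x, (v : B → F) x ≠ 0 := by
    by_contra h
    push Not at h
    exact hv0 (Subtype.ext (funext h))
  obtain ⟨x0, hx0⟩ := hv2
  have h2 := hmax (u + v) (V.add_mem hu v.2)
  have hx0u : u x0 = 0 := by
    by_contra h
    exact hx0 (hv1 x0 h)
  have : #{x | u x ≠ 0} < #{x | (u + (v : B → F)) x ≠ 0} := by
    apply card_lt_card
    refine ⟨fun x hx => ?_, fun hss => ?_⟩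
    · simp only [mem_filter, mem_univ, true_and] at hx ⊢
      simpa [hv1 x hx] using hx
    · have := hss (show x0 ∈ _ by simpa [hx0u] using hx0)
      simp [hx0u] at this
  omega

open Finset in
lemma slice_rank_bound {F B M : Type*} [Field F] [Fintype B] [DecidableEq B] [Fintype M]
    (P : M → B → F) (f g h : M → B → B → F)
    (hT : ∀ x y z : B, (if x = y ∧ y = z then (1 : F) else 0) =
      ∑ m, P m x * f m y z + ∑ m, P m y * g m x z + ∑ m, P m z * h m x y) :
    Fintype.card B ≤ 3 * Fintype.card M := by
  classical
  let L : (B → F) →ₗ[F] (M → F) := Matrix.mulVecLin (Matrix.of P)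
  obtain ⟨u, hu, hus⟩ := exists_large_support (LinearMap.ker L)
  have hrk := LinearMap.finrank_range_add_finrank_ker L
  have hr : Module.finrank F (LinearMap.range L) ≤ Fintype.card M := by
    simpa using Submodule.finrank_le (LinearMap.range L)
  rw [Module.finrank_pi] at hrk
  have hu0 : ∀ m, ∑ x, P m x * u x = 0 := by
    intro m
    have := congrFun (LinearMap.mem_ker.1 hu) m
    simpa [L, Matrix.mulVec, dotProduct] using this
  let P1 : Matrix B M F := Matrix.of fun y m => P m y
  let G : Matrix M B F := Matrix.of fun m z => ∑ x, u x * g m x z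
  let H : Matrix B M F := Matrix.of fun y m => ∑ x, u x * h m x y
  let P2 : Matrix M B F := Matrix.of P
  have hD : Matrix.diagonal u = P1 * G + H * P2 := by
    ext y z
    have e1 : Matrix.diagonal u y z = ∑ x, u x * (if x = y ∧ y = z then (1 : F) else 0) := by
      by_cases hyz : y = z
      · subst hyz; simp
      · simp [hyz]
    rw [e1]
    simp_rw [hT, mul_add, sum_add_distrib]
    have e2 : ∑ x, u x * ∑ m, P m x * f m y z = 0 := by
      simp_rw [mul_sum]
      rw [sum_comm]
      apply sum_eq_zero
      intro m _
      have : ∑ x, u x * (P m x * f m y z) = (∑ x, P m x * u x) * f m y z := by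
        rw [sum_mul]; exact sum_congr rfl fun x _ => by ring
      rw [this, hu0, zero_mul]
    rw [e2, zero_add]
    simp only [Matrix.add_apply, Matrix.mul_apply, P1, G, H, P2, Matrix.of_apply]
    congr 1
    · simp_rw [mul_sum]
      rw [sum_comm]
      exact sum_congr rfl fun m _ => sum_congr rfl fun x _ => by ring
    · simp_rw [mul_sum, sum_mul]
      rw [sum_comm]
      exact sum_congr rfl fun m _ => sum_congr rfl fun x _ => by ring
  have hrank : (Matrix.diagonal u).rank ≤ Fintype.card M + Fintype.card M := by
    rw [hD, ← Matrix.fromCols_mul_fromRows]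
    refine (Matrix.rank_mul_le_left _ _).trans ((Matrix.rank_le_card_width _).trans ?_)
    simp
  rw [Matrix.rank_diagonal, Fintype.card_subtype] at hrank
  omega
open Finset in
/-- exponent vectors of low degree -/
def lowExp (q n : ℕ) : Finset (Fin n → ℕ) :=
  (Fintype.piFinset fun _ => range q).filter fun m => 3 * ∑ i, m i ≤ (q - 1) * n

open Finset in
lemma exists_w (q : ℕ) (hq : 2 ≤ q) :
    ∃ w : ℝ, 0 < w ∧ w < 1 ∧ ∑ k ∈ range q, w ^ (3 * k) < q * w ^ (q - 1) := by
  let h : ℝ → ℝ := fun w => ∑ k ∈ range q, w ^ (3 * k) - q * w ^ (q - 1)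
  have hder : HasDerivAt h (∑ k ∈ range q, (((3 * k : ℕ) : ℝ) * 1 ^ (3 * k - 1))
      - q * (((q - 1 : ℕ) : ℝ) * 1 ^ (q - 1 - 1))) 1 := by
    apply HasDerivAt.sub
    · apply HasDerivAt.fun_sum
      intro k _
      exact hasDerivAt_pow _ _
    · exact (hasDerivAt_pow _ _).const_mul _
  have hpos : 0 < ∑ k ∈ range q, (((3 * k : ℕ) : ℝ) * 1 ^ (3 * k - 1))
      - q * (((q - 1 : ℕ) : ℝ) * 1 ^ (q - 1 - 1)) := by
    have e : (∑ k ∈ range q, (k : ℝ)) * 2 = q * ((q : ℝ) - 1) := by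
      have := Finset.sum_range_id_mul_two q
      have h2 : ((∑ k ∈ range q, k : ℕ) : ℝ) * 2 = q * ((q - 1 : ℕ) : ℝ) := by exact_mod_cast this
      rw [Nat.cast_sub (by omega)] at h2
      push_cast at h2
      exact h2
    have hq' : (2 : ℝ) ≤ q := by exact_mod_cast hq
    have : ((q - 1 : ℕ) : ℝ) = q - 1 := by rw [Nat.cast_sub (by omega)]; simp
    simp only [one_pow, mul_one, Nat.cast_mul, this, ← mul_sum]
    push_cast
    nlinarith
  have h1 : h 1 = 0 := by simp [h]
  have hs := hder.tendsto_slope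
  have hev := (hs.eventually_const_lt hpos)
  have hev2 : ∀ᶠ w in nhdsWithin (1 : ℝ) (Set.Iio 1), 0 < slope h 1 w :=
    hev.filter_mono (nhdsWithin_mono _ (fun x hx => ne_of_lt hx))
  have hev3 : ∀ᶠ w in nhdsWithin (1 : ℝ) (Set.Iio 1), (0 : ℝ) < w :=
    (lt_mem_nhds one_pos).filter_mono nhdsWithin_le_nhds
  obtain ⟨w, ⟨ha, hb⟩, hc⟩ := ((hev2.and hev3).and self_mem_nhdsWithin).exists
  refine ⟨w, hb, hc, ?_⟩
  have hc' : w < 1 := hc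
  rw [slope_def_field, h1, sub_zero] at ha
  have : h w < 0 := by
    by_contra hcon
    push Not at hcon
    exact absurd ha (not_lt.2 (div_nonpos_of_nonneg_of_nonpos hcon (by linarith)))
  simpa [h] using this

open Finset in
lemma lowExp_bound (q : ℕ) (hq : 2 ≤ q) :
    ∃ c : ℝ, 0 < c ∧ c < q ∧ ∀ n, (#(lowExp q n) : ℝ) ≤ c ^ n := by
  obtain ⟨w, hw0, hw1, hw⟩ := exists_w q hq
  refine ⟨(∑ k ∈ range q, w ^ (3 * k)) / w ^ (q - 1), ?_, ?_, fun n => ?_⟩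
  · apply div_pos _ (by positivity)
    exact sum_pos (fun _ _ => by positivity) ⟨0, by simp; omega⟩
  · rwa [div_lt_iff₀ (by positivity)]
  · rw [div_pow, le_div_iff₀ (by positivity), ← pow_mul]
    have e : (∑ k ∈ range q, w ^ (3 * k)) ^ n =
        ∑ m ∈ Fintype.piFinset (fun _ : Fin n => range q), ∏ i, w ^ (3 * m i) := by
      have := Finset.prod_univ_sum (fun _ : Fin n => range q) (fun _ k => w ^ (3 * k))
      simpa using this
    rw [e]
    calc (#(lowExp q n) : ℝ) * w ^ ((q - 1) * n) = ∑ m ∈ lowExp q n, w ^ ((q - 1) * n) := by simp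
      _ ≤ ∑ m ∈ lowExp q n, ∏ i, w ^ (3 * m i) := by
        apply sum_le_sum
        intro m hm
        rw [prod_pow_eq_pow_sum, ← mul_sum]
        exact pow_le_pow_of_le_one hw0.le hw1.le (mem_filter.1 hm).2
      _ ≤ _ := by
        apply sum_le_sum_of_subset_of_nonneg (filter_subset _ _)
        intros; positivity

open Finset in
lemma indep_set {V : Type*} [DecidableEq V] (N : V → Finset V) (D : ℕ) (A : Finset V)
    (hN : ∀ v ∈ A, #(N v) ≤ D) :
    ∃ B ⊆ A, #A ≤ (2 * D + 1) * #B ∧ ∀ u ∈ B, ∀ v ∈ B, u ≠ v → u ∉ N v := by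
  induction A using Finset.strongInduction with
  | H A ih =>
    rcases A.eq_empty_or_nonempty with rfl | hne
    · exact ⟨∅, by simp⟩
    obtain ⟨v, hv, hdeg⟩ : ∃ v ∈ A, #{u ∈ A | v ∈ N u} ≤ D := by
      by_contra hcon
      push Not at hcon
      have h1 : ∑ v ∈ A, #{u ∈ A | v ∈ N u} = ∑ u ∈ A, #{v ∈ A | v ∈ N u} := by
        simp_rw [card_filter]
        exact sum_comm
      have h2 : ∑ u ∈ A, #{v ∈ A | v ∈ N u} ≤ ∑ u ∈ A, D := by
        apply sum_le_sum
        intro u hu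
        refine (card_le_card ?_).trans (hN u hu)
        intro x hx
        exact (mem_filter.1 hx).2
      have h3 : ∑ v ∈ A, D < ∑ v ∈ A, #{u ∈ A | v ∈ N u} := sum_lt_sum_of_nonempty hne hcon
      omega
    let R : Finset V := insert v (N v ∪ {u ∈ A | v ∈ N u})
    have hR : #R ≤ 2 * D + 1 := by
      have h1 := card_insert_le v (N v ∪ {u ∈ A | v ∈ N u})
      have h2 := card_union_le (N v) {u ∈ A | v ∈ N u}
      have h3 := hN v hv
      change #(insert v _) ≤ _
      omega
    have hss : A \ R ⊂ A := by
      refine ⟨sdiff_subset, fun h => ?_⟩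
      have := h hv
      simp [R] at this
    obtain ⟨B, hBA, hB, hind⟩ := ih (A \ R) hss (fun u hu => hN u (sdiff_subset hu))
    have hvB : v ∉ B := fun h => by
      have := hBA h
      simp [R] at this
    refine ⟨insert v B, ?_, ?_, ?_⟩
    · intro x hx
      rcases mem_insert.1 hx with rfl | hx
      · exact hv
      · exact sdiff_subset (hBA hx)
    · rw [card_insert_of_notMem hvB]
      have := card_le_card_sdiff_add_card (s := A) (t := R)
      nlinarith
    · intro x hx y hy hxy
      rcases mem_insert.1 hx with rfl | hx' <;> rcases mem_insert.1 hy with rfl | hy'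
      · exact absurd rfl hxy
      · have h1 := hBA hy'
        simp only [R, mem_sdiff, mem_insert, mem_union, mem_filter, not_or, not_and] at h1
        exact h1.2.2.2 h1.1
      · have h1 := hBA hx'
        simp only [R, mem_sdiff, mem_insert, mem_union, mem_filter, not_or, not_and] at h1
        exact h1.2.2.1
      · exact hind x hx' y hy' hxy
open Finset in
lemma sum_fiber_aux {F I E : Type*} [Field F] [DecidableEq E] (c : Finset I) (M : Finset E)
    (φ : I → E) (hφ : ∀ f ∈ c, φ f ∈ M) (p : E → F) (R : I → F) :
    ∑ f ∈ c, p (φ f) * R f = ∑ m : M, p m * ∑ f ∈ c with φ f = m, R f := by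
  rw [← Finset.sum_fiberwise_of_maps_to hφ, ← Finset.sum_coe_sort M]
  apply sum_congr rfl
  intro m _
  rw [mul_sum]
  apply sum_congr rfl
  intro f hf
  rw [(mem_filter.1 hf).2]

open Finset in
lemma EG_three {F : Type*} [Field F] [Fintype F] {n : ℕ} (b : Fin 3 → F) (hb : b 0 + b 1 + b 2 = 0)
    (B : Finset (Fin n → F))
    (hB : ∀ x ∈ B, ∀ y ∈ B, ∀ z ∈ B, b 0 • x + b 1 • y + b 2 • z = 0 → x = y ∧ y = z) :
    #B ≤ 3 * #(lowExp (Fintype.card F) n) := by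
  classical
  set q := Fintype.card F with hq
  have hq2 : 1 < q := Fintype.one_lt_card
  let p : MvPolynomial (Fin 3) F := 1 - (∑ j, MvPolynomial.C (b j) * MvPolynomial.X j) ^ (q - 1)
  have hp : ∀ t ∈ p.support, ∑ j, t j ≤ q - 1 := by
    intro t ht
    have h1 := MvPolynomial.le_totalDegree ht
    rw [Finsupp.sum_fintype _ _ (fun _ => rfl)] at h1
    refine h1.trans ((MvPolynomial.totalDegree_sub _ _).trans ?_)
    simp only [MvPolynomial.totalDegree_one, zero_le, sup_of_le_right]
    refine (MvPolynomial.totalDegree_pow _ _).trans ?_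
    have : (∑ j, MvPolynomial.C (b j) * MvPolynomial.X j : MvPolynomial (Fin 3) F).totalDegree
        ≤ 1 := by
      refine MvPolynomial.totalDegree_finsetSum_le fun j _ => ?_
      refine (MvPolynomial.totalDegree_mul _ _).trans ?_
      simp
    nlinarith
  let S := Fintype.piFinset fun _ : Fin n => p.support
  let mon : (Fin n → ℕ) → (Fin n → F) → F := fun m x => ∏ i, x i ^ m i
  let C : (Fin n → (Fin 3 →₀ ℕ)) → F := fun f => ∏ i, p.coeff (f i)
  let φ : Fin 3 → (Fin n → (Fin 3 →₀ ℕ)) → (Fin n → ℕ) := fun j f i => f i j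
  let M := lowExp q n
  have hexp : ∀ x y z : Fin n → F, ∏ i, (1 - (b 0 * x i + b 1 * y i + b 2 * z i) ^ (q - 1)) =
      ∑ f ∈ S, C f * mon (φ 0 f) x * mon (φ 1 f) y * mon (φ 2 f) z := by
    intro x y z
    have e1 : ∀ i, 1 - (b 0 * x i + b 1 * y i + b 2 * z i) ^ (q - 1) =
        ∑ t ∈ p.support, p.coeff t * x i ^ t 0 * y i ^ t 1 * z i ^ t 2 := by
      intro i
      have h1 : 1 - (b 0 * x i + b 1 * y i + b 2 * z i) ^ (q - 1) =
          MvPolynomial.eval ![x i, y i, z i] p := by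
        simp [p, Fin.sum_univ_three]
      rw [h1, MvPolynomial.eval_eq']
      simp only [Fin.prod_univ_three, Matrix.cons_val_zero, Matrix.cons_val_one, Matrix.cons_val]
      exact sum_congr rfl fun t _ => by ring
    simp_rw [e1]
    rw [Finset.prod_univ_sum]
    apply sum_congr rfl
    intro f _
    simp only [C, mon, φ, prod_mul_distrib]
  have hind : ∀ x y z : B, (if x = y ∧ y = z then (1 : F) else 0) =
      ∏ i, (1 - (b 0 * x.1 i + b 1 * y.1 i + b 2 * z.1 i) ^ (q - 1)) := by
    intro x y z
    by_cases h : b 0 • x.1 + b 1 • y.1 + b 2 • z.1 = 0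
    · have h2 := hB _ x.2 _ y.2 _ z.2 h
      rw [if_pos ⟨Subtype.ext h2.1, Subtype.ext h2.2⟩]
      symm
      apply prod_eq_one
      intro i _
      have := congrFun h i
      simp only [Pi.add_apply, Pi.smul_apply, smul_eq_mul, Pi.zero_apply] at this
      rw [this, zero_pow (by omega), sub_zero]
    · have hne : ¬ (x = y ∧ y = z) := by
        rintro ⟨rfl, rfl⟩
        apply h
        rw [← add_smul, ← add_smul, hb, zero_smul]
      rw [if_neg hne]
      obtain ⟨i, hi⟩ := Function.ne_iff.1 h
      simp only [Pi.add_apply, Pi.smul_apply, smul_eq_mul, Pi.zero_apply] at hi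
      symm
      apply prod_eq_zero (mem_univ i)
      rw [FiniteField.pow_card_sub_one_eq_one _ hi, sub_self]
  have hrange : ∀ f ∈ S, ∀ j, φ j f ∈ Fintype.piFinset fun _ : Fin n => range q := by
    intro f hf j
    rw [Fintype.mem_piFinset]
    intro i
    have h1 := hp _ (Fintype.mem_piFinset.1 hf i)
    have h2 : f i j ≤ ∑ j, f i j := single_le_sum (f := fun j => f i j) (by simp) (mem_univ j)
    simp only [φ, mem_range]
    omega
  have htot : ∀ f ∈ S, ∑ i, φ 0 f i + ∑ i, φ 1 f i + ∑ i, φ 2 f i ≤ (q - 1) * n := by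
    intro f hf
    rw [← sum_add_distrib, ← sum_add_distrib]
    calc _ ≤ ∑ i : Fin n, (q - 1) := by
          apply sum_le_sum
          intro i _
          have h1 := hp _ (Fintype.mem_piFinset.1 hf i)
          rwa [Fin.sum_univ_three] at h1
      _ = _ := by simp [mul_comm]
  let c0 := S.filter fun f => φ 0 f ∈ M
  let c1 := (S.filter fun f => ¬ φ 0 f ∈ M).filter fun f => φ 1 f ∈ M
  let c2 := (S.filter fun f => ¬ φ 0 f ∈ M).filter fun f => ¬ φ 1 f ∈ M
  have h2 : ∀ f ∈ c2, φ 2 f ∈ M := by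
    intro f hf
    simp only [c2, mem_filter] at hf
    obtain ⟨⟨hS, h0⟩, h1⟩ := hf
    have := htot f hS
    simp only [M, lowExp, mem_filter, hrange f hS, true_and] at h0 h1 ⊢
    omega
  have := slice_rank_bound (B := B) (M := M) (fun m x => mon m x)
    (fun m y z => ∑ f ∈ c0 with φ 0 f = m, C f * mon (φ 1 f) y * mon (φ 2 f) z)
    (fun m x z => ∑ f ∈ c1 with φ 1 f = m, C f * mon (φ 0 f) x * mon (φ 2 f) z)
    (fun m x y => ∑ f ∈ c2 with φ 2 f = m, C f * mon (φ 0 f) x * mon (φ 1 f) y) ?_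
  · simpa using this
  intro x y z
  rw [hind, hexp]
  rw [← sum_fiber_aux c0 M (φ 0) (fun f hf => (mem_filter.1 hf).2) (fun m => mon m x),
    ← sum_fiber_aux c1 M (φ 1) (fun f hf => (mem_filter.1 hf).2) (fun m => mon m y),
    ← sum_fiber_aux c2 M (φ 2) h2 (fun m => mon m z)]
  rw [← sum_filter_add_sum_filter_not S (fun f => φ 0 f ∈ M),
    ← sum_filter_add_sum_filter_not (S.filter fun f => ¬ φ 0 f ∈ M) (fun f => φ 1 f ∈ M), ← add_assoc]
  congr 1
  · congr 1
    · exact sum_congr rfl fun f _ => by ring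
    · exact sum_congr rfl fun f _ => by ring
  · exact sum_congr rfl fun f _ => by ring

/-- every large set has a distinct solution -/
def HasSol (F : Type*) [Field F] [Fintype F] {ι : Type*} [Fintype ι] (a : ι → F) : Prop :=
  ∃ c : ℝ, 0 < c ∧ c < Fintype.card F ∧ ∃ N : ℕ, ∀ n, N ≤ n → ∀ A : Finset (Fin n → F),
    c ^ n < (A.card : ℝ) → ∃ x : ι → (Fin n → F), (∀ i, x i ∈ A) ∧ Function.Injective x ∧
      ∑ i, a i • x i = 0

/-- `y` is robustly a weighted combination of elements of `A` -/
def Good {F : Type*} [Field F] [Fintype F] {ι : Type*} [Fintype ι] {n : ℕ} (b : ι → F) (K : ℕ)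
    (A : Finset (Fin n → F)) (y : Fin n → F) : Prop :=
  ∀ E : Finset (Fin n → F), E.card ≤ K → ∃ x : ι → (Fin n → F), (∀ i, x i ∈ A ∧ x i ∉ E) ∧
    Function.Injective x ∧ ∑ i, b i • x i = (∑ i, b i) • y

/-- every large set has a good element -/
def HasGood (F : Type*) [Field F] [Fintype F] {ι : Type*} [Fintype ι] (b : ι → F) : Prop :=
  ∃ c : ℝ, 0 < c ∧ c < Fintype.card F ∧ ∀ K : ℕ, ∃ N : ℕ, ∀ n, N ≤ n → ∀ A : Finset (Fin n → F),
    c ^ n < (A.card : ℝ) → ∃ y ∈ A, Good b K A y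

lemma eventually_pow {c c' : ℝ} (hc : 0 < c) (h : c < c') (T : ℝ) :
    ∃ N : ℕ, ∀ n, N ≤ n → T * c ^ n < c' ^ n := by
  have h1 : 1 < c' / c := by rwa [one_lt_div hc]
  have h2 := (tendsto_pow_atTop_atTop_of_one_lt h1).eventually_gt_atTop T
  obtain ⟨N, hN⟩ := Filter.eventually_atTop.1 h2
  refine ⟨N, fun n hn => ?_⟩
  have := hN n hn
  rwa [div_pow, lt_div_iff₀ (by positivity)] at this

open Finset in
lemma hasGood_two {F : Type*} [Field F] [Fintype F] (b : Fin 2 → F) (hb : ∀ i, b i ≠ 0)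
    (hs : ∑ i, b i ≠ 0) : HasGood F b := by
  classical
  obtain ⟨c, hc0, hcq, hc⟩ := lowExp_bound (Fintype.card F) Fintype.one_lt_card
  obtain ⟨c', h1, h2⟩ := exists_between hcq
  refine ⟨c', hc0.trans h1, h2, fun K => ?_⟩
  obtain ⟨N, hN⟩ := eventually_pow hc0 h1 ((2 * (2 * K) + 1) * 3)
  refine ⟨N, fun n hn A hA => ?_⟩
  by_contra hcon
  push Not at hcon
  have hcon' : ∀ y, ∃ E : Finset (Fin n → F), #E ≤ K ∧ (y ∈ A → ∀ x : Fin 2 → (Fin n → F),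
      (∀ i, x i ∈ A ∧ x i ∉ E) → Function.Injective x → ∑ i, b i • x i ≠ (∑ i, b i) • y) := by
    intro y
    by_cases hy : y ∈ A
    · have := hcon y hy
      unfold Good at this
      push Not at this
      obtain ⟨E, hE, h⟩ := this
      exact ⟨E, hE, fun _ => h⟩
    · exact ⟨∅, by simp, fun h => absurd h hy⟩
  choose E hE hEx using hcon'
  rw [Fin.sum_univ_two] at hs
  -- forbidden first coordinates
  let Nb : (Fin n → F) → Finset (Fin n → F) := fun y =>
    E y ∪ (E y).image fun v => (b 0)⁻¹ • ((b 0 + b 1) • y - b 1 • v)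
  have hNb : ∀ y ∈ A, #(Nb y) ≤ 2 * K := by
    intro y _
    have h1 := card_union_le (E y) ((E y).image fun v => (b 0)⁻¹ • ((b 0 + b 1) • y - b 1 • v))
    have h2 := card_image_le (s := E y) (f := fun v => (b 0)⁻¹ • ((b 0 + b 1) • y - b 1 • v))
    have h3 := hE y
    change #(_ ∪ _) ≤ _
    omega
  obtain ⟨B, hBA, hcard, hind⟩ := indep_set Nb (2 * K) A hNb
  have hEG := EG_three (n := n) ![b 0, b 1, -(b 0 + b 1)] (by simp) B (by
    intro x hx y hy z hz h
    simp only [Matrix.cons_val_zero, Matrix.cons_val_one, Matrix.cons_val] at h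
    have h' : b 0 • x + b 1 • y = (b 0 + b 1) • z := by
      rw [neg_smul] at h
      exact eq_of_sub_eq_zero (by rw [sub_eq_add_neg]; exact h)
    have hxy_of : x = y → x = y ∧ y = z := by
      rintro rfl
      refine ⟨rfl, ?_⟩
      rw [← add_smul] at h'
      exact smul_right_injective _ hs h'
    by_cases hxy : x = y
    · exact hxy_of hxy
    by_cases hxz : x = z
    · subst hxz
      apply hxy_of
      rw [add_smul] at h'
      exact (smul_right_injective _ (hb 1) (add_left_cancel h')).symm
    exfalso
    have hx0 : x = (b 0)⁻¹ • ((b 0 + b 1) • z - b 1 • y) := by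
      rw [← h', add_sub_cancel_right, smul_smul, inv_mul_cancel₀ (hb 0), one_smul]
    have hxn := hind x hx z hz hxz
    simp only [Nb, mem_union, mem_image, not_or, not_exists, not_and] at hxn
    refine hEx z (hBA hz) ![x, y] ?_ ?_ ?_
    · intro i
      fin_cases i
      · exact ⟨hBA hx, hxn.1⟩
      · exact ⟨hBA hy, fun hyE => hxn.2 y hyE hx0.symm⟩
    · intro i j hij
      fin_cases i <;> fin_cases j
      · rfl
      · exact absurd hij hxy
      · exact absurd hij.symm hxy
      · rfl
    · simpa [Fin.sum_univ_two] using h')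
  have e1 : (#A : ℝ) ≤ ((2 * (2 * K) + 1) * 3) * c ^ n := by
    have h3 : (#A : ℝ) ≤ (2 * (2 * K) + 1) * #B := by exact_mod_cast hcard
    have h4 : (#B : ℝ) ≤ 3 * #(lowExp (Fintype.card F) n) := by exact_mod_cast hEG
    have h5 := hc n
    have h6 : (#B : ℝ) ≤ 3 * c ^ n := by linarith
    calc _ ≤ _ := h3
      _ ≤ (2 * (2 * K) + 1) * (3 * c ^ n) := by gcongr
      _ = _ := by ring
  have := hN n hn
  linarith

open Finset in
lemma hasGood_three {F : Type*} [Field F] [Fintype F] (b : Fin 3 → F) (r : F) (hr : r ≠ 0)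
    (hb : ∀ i, b i = r) (h2 : r + r = 0) : HasGood F b := by
  classical
  have hq2 : 1 < Fintype.card F := Fintype.one_lt_card
  set q := Fintype.card F with hq
  have hq2' : (2 : ℝ) ≤ q := by exact_mod_cast hq2
  have hF2 : (2 : F) = 0 := by
    have : (2 : F) * r = 0 := by rw [two_mul, h2]
    exact (mul_eq_zero.1 this).resolve_right hr
  have hvv : ∀ {n : ℕ} (v : Fin n → F), v + v = 0 := by
    intro n v
    rw [← two_smul F v, hF2, zero_smul]
  refine ⟨3 / 4 * q, by linarith, by linarith, fun K => ?_⟩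
  obtain ⟨N1, hN1⟩ := eventually_pow (c := 1) (c' := 3 / 4 * q) one_pos (by linarith) (2 * (K + 1))
  obtain ⟨N2, hN2⟩ := eventually_pow (c := q) (c' := (3 / 4 * q) * (3 / 4 * q)) (by linarith)
    (by nlinarith) (2 * (2 * (K + 1)))
  refine ⟨max N1 N2, fun n hn A hA => ?_⟩
  by_contra hcon
  push Not at hcon
  have hcon' : ∀ y, ∃ E : Finset (Fin n → F), #E ≤ K ∧ (y ∈ A → ∀ x : Fin 3 → (Fin n → F),
      (∀ i, x i ∈ A ∧ x i ∉ E) → Function.Injective x → ∑ i, b i • x i ≠ (∑ i, b i) • y) := by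
    intro y
    by_cases hy : y ∈ A
    · have := hcon y hy
      unfold Good at this
      push Not at this
      obtain ⟨E, hE, h⟩ := this
      exact ⟨E, hE, fun _ => h⟩
    · exact ⟨∅, by simp, fun h => absurd h hy⟩
  choose E hE hEx using hcon'
  let P : Finset (Σ _ : (Fin n → F), (Fin n → F)) := A.sigma fun y => A \ insert y (E y)
  have hP : #A * (#A - (K + 1)) ≤ #P := by
    rw [card_sigma, ← smul_eq_mul]
    apply card_nsmul_le_sum
    intro y _
    have h1 := le_card_sdiff (insert y (E y)) A
    have h3 := card_insert_le y (E y)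
    have h4 := hE y
    omega
  have hlarge : q ^ n * (2 * (K + 1)) < #P := by
    refine lt_of_lt_of_le ?_ hP
    have h3 := hN1 n (le_trans (le_max_left _ _) hn)
    have h4 := hN2 n (le_trans (le_max_right _ _) hn)
    rw [one_pow, mul_one] at h3
    have h5 : (2 * (K + 1) : ℝ) < #A := h3.trans hA
    have h5' : 2 * (K + 1) < #A := by exact_mod_cast h5
    have h6 : ((3 / 4 * q : ℝ) * (3 / 4 * q)) ^ n ≤ #A * #A := by
      rw [mul_pow]
      have : (0 : ℝ) ≤ (3 / 4 * q : ℝ) ^ n := by positivity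
      gcongr
    have h7 : (2 * (2 * (K + 1)) : ℝ) * q ^ n < #A * #A := lt_of_lt_of_le h4 h6
    have h7' : (2 * (2 * (K + 1))) * q ^ n < #A * #A := by exact_mod_cast h7
    have h8 : #A ≤ 2 * (#A - (K + 1)) := by omega
    nlinarith [Nat.mul_le_mul_left (#A) h8]
  obtain ⟨s, -, hs⟩ := exists_lt_card_fiber_of_mul_lt_card_of_maps_to (s := P)
    (t := (univ : Finset (Fin n → F))) (f := fun w => w.1 + w.2) (n := 2 * (K + 1))
    (fun _ _ => mem_univ _) (by simpa using hlarge)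
  obtain ⟨⟨y, v⟩, hyv⟩ := card_pos.1 (lt_of_le_of_lt (Nat.zero_le _) hs)
  simp only [P, mem_filter, mem_sigma, mem_sdiff, mem_insert, not_or] at hyv
  obtain ⟨⟨hyA, hvA, hvy, hvE⟩, hsum⟩ := hyv
  -- the bad pairs
  let Q : Finset (Σ _ : (Fin n → F), (Fin n → F)) :=
    (insert v (E y)).image (fun u => ⟨u, s - u⟩) ∪ (insert v (E y)).image (fun u => ⟨s - u, u⟩)
  have hQ : #Q ≤ 2 * (K + 1) := by
    have h1 := card_union_le
      ((insert v (E y)).image (fun u => (⟨u, s - u⟩ : Σ _ : (Fin n → F), (Fin n → F))))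
      ((insert v (E y)).image (fun u => (⟨s - u, u⟩ : Σ _ : (Fin n → F), (Fin n → F))))
    have h3 := card_image_le (s := insert v (E y))
      (f := fun u => (⟨u, s - u⟩ : Σ _ : (Fin n → F), (Fin n → F)))
    have h4 := card_image_le (s := insert v (E y))
      (f := fun u => (⟨s - u, u⟩ : Σ _ : (Fin n → F), (Fin n → F)))
    have h5 := card_insert_le v (E y)
    have h6 := hE y
    change #(_ ∪ _) ≤ _
    omega
  obtain ⟨⟨y', v'⟩, hm, hnQ⟩ := exists_mem_notMem_of_card_lt_card (lt_of_le_of_lt hQ hs)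
  simp only [P, mem_filter, mem_sigma, mem_sdiff, mem_insert, not_or] at hm
  obtain ⟨⟨hyA', hvA', hvy', hvE'⟩, hsum'⟩ := hm
  have hn1 : y' ∉ insert v (E y) := fun h => hnQ <| mem_union_left _ <|
    mem_image.2 ⟨y', h, by rw [← hsum', add_sub_cancel_left]⟩
  have hn2 : v' ∉ insert v (E y) := fun h => hnQ <| mem_union_right _ <|
    mem_image.2 ⟨v', h, by rw [← hsum', add_sub_cancel_right]⟩
  simp only [mem_insert, not_or] at hn1 hn2
  refine hEx y hyA ![v, y', v'] ?_ ?_ ?_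
  · intro i
    fin_cases i
    · exact ⟨hvA, hvE⟩
    · exact ⟨hyA', hn1.2⟩
    · exact ⟨hvA', hn2.2⟩
  · intro i j hij
    fin_cases i <;> fin_cases j
    · rfl
    · exact absurd hij.symm hn1.1
    · exact absurd hij.symm hn2.1
    · exact absurd hij hn1.1
    · rfl
    · exact absurd hij.symm hvy'
    · exact absurd hij hn2.1
    · exact absurd hij hvy'
    · rfl
  · simp only [Fin.sum_univ_three, hb, Matrix.cons_val_zero, Matrix.cons_val_one, Matrix.cons_val]
    rw [h2, zero_add, ← smul_add, ← smul_add, add_assoc, hsum', ← hsum, add_comm y v, ← add_assoc,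
      hvv, zero_add]

lemma HasSol.of_equiv {F : Type*} [Field F] [Fintype F] {ι κ : Type*} [Fintype ι] [Fintype κ]
    (e : ι ≃ κ) (a : κ → F) (h : HasSol F (a ∘ e)) : HasSol F a := by
  obtain ⟨c, h0, h1, N, hN⟩ := h
  refine ⟨c, h0, h1, N, fun n hn A hA => ?_⟩
  obtain ⟨x, hx, hi, hs⟩ := hN n hn A hA
  refine ⟨x ∘ e.symm, fun i => hx _, hi.comp e.symm.injective, ?_⟩
  rw [← hs, ← Equiv.sum_comp e]
  simp

lemma HasGood.of_equiv {F : Type*} [Field F] [Fintype F] {ι κ : Type*} [Fintype ι] [Fintype κ]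
    (e : ι ≃ κ) (a : κ → F) (h : HasGood F (a ∘ e)) : HasGood F a := by
  obtain ⟨c, h0, h1, hK⟩ := h
  refine ⟨c, h0, h1, fun K => ?_⟩
  obtain ⟨N, hN⟩ := hK K
  refine ⟨N, fun n hn A hA => ?_⟩
  obtain ⟨y, hy, hg⟩ := hN n hn A hA
  refine ⟨y, hy, fun E hE => ?_⟩
  obtain ⟨x, hx, hi, hs⟩ := hg E hE
  refine ⟨x ∘ e.symm, fun i => hx _, hi.comp e.symm.injective, ?_⟩
  rw [← Equiv.sum_comp e a, ← Equiv.sum_comp e]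
  simpa using hs

lemma HasGood.sol_unit {F : Type*} [Field F] [Fintype F] {ι κ : Type*} [Fintype ι] [Fintype κ]
    [Unique κ] (b : ι → F) (a : κ → F) (h : HasGood F b)
    (hs : ∑ i, b i + ∑ i, a i = 0) : HasSol F (Sum.elim b a) := by
  obtain ⟨c, h0, h1, hK⟩ := h
  obtain ⟨N, hN⟩ := hK 1
  refine ⟨c, h0, h1, N, fun n hn A hA => ?_⟩
  obtain ⟨y, hy, hg⟩ := hN n hn A hA
  obtain ⟨x, hx, hi, hsx⟩ := hg {y} (by simp)
  refine ⟨Sum.elim x fun _ => y, ?_, ?_, ?_⟩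
  · rintro (i | i)
    · exact (hx i).1
    · exact hy
  · refine hi.sumElim (Function.injective_of_subsingleton _) ?_
    intro i j
    simpa using (hx i).2
  · rw [Fintype.sum_sum_type]
    simp only [Sum.elim_inl, Sum.elim_inr]
    rw [hsx, ← Finset.sum_smul, ← add_smul, hs, zero_smul]

open Finset in
lemma HasGood.sol_step {F : Type*} [Field F] [Fintype F] {ι κ : Type*} [Fintype ι] [Fintype κ]
    (b : ι → F) (a : κ → F) (h : HasGood F b)
    (hs : HasSol F (fun o : Option κ => o.elim (∑ i, b i) a)) : HasSol F (Sum.elim b a) := by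
  classical
  obtain ⟨c, h0, h1, hK⟩ := h
  obtain ⟨c', h0', h1', N', hN'⟩ := hs
  obtain ⟨N, hN⟩ := hK (Fintype.card κ)
  obtain ⟨C, hC, hC'⟩ := exists_between (max_lt h1 h1')
  obtain ⟨N2, hN2⟩ := eventually_pow (lt_max_of_lt_left h0) hC 2
  refine ⟨C, (lt_max_of_lt_left h0).trans hC, hC', max N2 (max N N'), fun n hn A hA => ?_⟩
  have g1 := hN2 n (le_trans (le_max_left _ _) hn)
  have g2 : c ^ n ≤ (max c c') ^ n := by gcongr; exact le_max_left _ _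
  have g3 : c' ^ n ≤ (max c c') ^ n := by gcongr; exact le_max_right _ _
  have hbad : (#{y ∈ A | ¬ Good b (Fintype.card κ) A y} : ℝ) ≤ c ^ n := by
    by_contra hcon
    push Not at hcon
    obtain ⟨y, hy, hg⟩ := hN n (le_trans ((le_max_left _ _).trans (le_max_right _ _)) hn) _ hcon
    refine (mem_filter.1 hy).2 fun E hE => ?_
    obtain ⟨x, hx, hr⟩ := hg E hE
    exact ⟨x, fun i => ⟨(mem_filter.1 (hx i).1).1, (hx i).2⟩, hr⟩
  have hsplit : (#{y ∈ A | Good b (Fintype.card κ) A y} : ℝ)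
      + #{y ∈ A | ¬ Good b (Fintype.card κ) A y} = #A := by
    exact_mod_cast card_filter_add_card_filter_not (s := A) (Good b (Fintype.card κ) A)
  obtain ⟨z, hz, hzi, hzs⟩ := hN' n (le_trans ((le_max_right _ _).trans (le_max_right _ _)) hn)
    {y ∈ A | Good b (Fintype.card κ) A y} (by linarith)
  obtain ⟨x, hx, hxi, hxs⟩ := (mem_filter.1 (hz none)).2 (univ.image fun k : κ => z (some k))
    card_image_le
  refine ⟨Sum.elim x fun k => z (some k), ?_, ?_, ?_⟩
  · rintro (i | i)
    · exact (hx i).1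
    · exact (mem_filter.1 (hz (some i))).1
  · refine hxi.sumElim (hzi.comp (Option.some_injective _)) ?_
    intro i k hik
    exact (hx i).2 (mem_image.2 ⟨k, mem_univ _, hik.symm⟩)
  · rw [Fintype.sum_sum_type]
    simp only [Sum.elim_inl, Sum.elim_inr]
    rw [Fintype.sum_option] at hzs
    simpa [hxs] using hzs

open Finset in
lemma exists_good_subset {F ι : Type*} [Field F] [Fintype F] [Fintype ι] [DecidableEq ι]
    (hι : 3 ≤ Fintype.card ι) (a : ι → F) (ha : ∀ i, a i ≠ 0) (hs : ∑ i, a i = 0) :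
    ∃ S : Finset ι, 2 ≤ #S ∧ ∑ i ∈ S, a i ≠ 0 ∧ HasGood F (fun i : {i // i ∈ S} => a i) := by
  by_cases h : ∃ i j, i ≠ j ∧ a i + a j ≠ 0
  · obtain ⟨i, j, hij, hne⟩ := h
    have hc : #({i, j} : Finset ι) = 2 := card_pair hij
    refine ⟨{i, j}, hc.ge, by rwa [sum_pair hij], ?_⟩
    refine HasGood.of_equiv (equivFinOfCardEq hc).symm _ (hasGood_two _ (fun k => ha _) ?_)
    rw [Function.comp_def, Equiv.sum_comp (equivFinOfCardEq hc).symm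
      (fun k : {k // k ∈ ({i, j} : Finset ι)} => a k), sum_coe_sort _ a]
    rwa [sum_pair hij]
  · push Not at h
    obtain ⟨S, -, hS⟩ := exists_subset_card_eq (s := (univ : Finset ι)) (n := 3) (by simpa using hι)
    obtain ⟨i, j, k, hij, hik, hjk, rfl⟩ := card_eq_three.1 hS
    have e1 := h i j hij
    have e2 := h i k hik
    have e3 := h j k hjk
    have hii : a i + a i = 0 := by linear_combination e1 + e2 - e3
    have hall : ∀ l, a l = a i := by
      intro l
      by_cases hl : l = i
      · rw [hl]
      · linear_combination h l i hl - hii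
    refine ⟨{i, j, k}, by omega, ?_, ?_⟩
    · rw [sum_congr rfl (fun l _ => hall l), sum_const, hS]
      intro h3
      apply ha i
      have : (3 : ℕ) • a i = a i + (a i + a i) := by rw [succ_nsmul, two_nsmul, add_comm]
      rwa [this, hii, add_zero] at h3
    · exact HasGood.of_equiv (equivFinOfCardEq hS).symm _
        (hasGood_three _ (a i) (ha i) (fun l => hall _) hii)

open Finset in
lemma hasSol_main {F : Type*} [Field F] [Fintype F] (m : ℕ) : ∀ (ι : Type) [Fintype ι]
    (_ : Fintype.card ι = m) (_ : 3 ≤ m) (a : ι → F) (_ : ∀ i, a i ≠ 0) (_ : ∑ i, a i = 0),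
    HasSol F a := by
  classical
  induction m using Nat.strong_induction_on with
  | _ m ih =>
    intro ι _ hcard hm a ha hs
    obtain ⟨S, hS2, hSs, hSg⟩ := exists_good_subset (by omega) a ha hs
    apply HasSol.of_equiv (Equiv.sumCompl (fun i => i ∈ S)) a
    have e : a ∘ (Equiv.sumCompl (fun i => i ∈ S)) =
        Sum.elim (fun i : {i // i ∈ S} => a i) (fun i : {i // ¬ i ∈ S} => a i) := by
      ext (i | i) <;> simp
    rw [e]
    have hc1 : Fintype.card {i // i ∈ S} = #S := by simp
    have hc2 : Fintype.card {i // ¬ i ∈ S} = m - #S := by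
      rw [Fintype.card_subtype_compl, hcard, hc1]
    have hsplit : ∑ i : {i // i ∈ S}, a i + ∑ i : {i // ¬ i ∈ S}, a i = 0 := by
      rw [← hs]
      convert Fintype.sum_subtype_add_sum_subtype (fun i => i ∈ S) a
    have hsS : ∑ i : {i // i ∈ S}, a i = ∑ i ∈ S, a i := sum_coe_sort S a
    have hle : #S ≤ m := by rw [← hcard]; exact card_le_univ S
    rcases Nat.lt_or_ge (m - #S) 2 with hlt | hge
    · rcases Nat.eq_zero_or_pos (m - #S) with h0 | h0
      · exfalso
        rw [h0, Fintype.card_eq_zero_iff] at hc2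
        rw [hsS, Fintype.sum_empty, add_zero] at hsplit
        exact hSs hsplit
      · have h1 : Fintype.card {i // ¬ i ∈ S} = 1 := by omega
        obtain ⟨hu⟩ := Fintype.card_eq_one_iff_nonempty_unique.1 h1
        exact HasGood.sol_unit _ _ hSg hsplit
    · apply HasGood.sol_step _ _ hSg
      refine ih (m - #S + 1) (by omega) _ (by rw [Fintype.card_option, hc2]) (by omega) _ ?_ ?_
      · rintro (_ | i)
        · exact fun h => hSs (hsS.symm.trans h)
        · exact ha _
      · rw [Fintype.sum_option]
        exact hsplit

/-- **Theorem (multivariable Ellenberg–Gijswijt).**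
Let `d ≥ 4` and `a_1, …, a_d ∈ F_q \ {0}` with `a_1 + ⋯ + a_d = 0`. There exists
`c_q < q` such that for all sufficiently large `n`, every `A ⊆ F_q^n` with
`|A| > c_q^n` contains pairwise distinct `x_1, …, x_d` with
`a_1 x_1 + ⋯ + a_d x_d = 0`. -/
theorem multivariable_EG {F : Type*} [Field F] [Fintype F] {d : ℕ} (hd : 4 ≤ d)
    (a : Fin d → F) (ha : ∀ i, a i ≠ 0) (hsum : ∑ i, a i = 0) :
    ∃ cq : ℝ, cq < (Fintype.card F : ℝ) ∧ ∃ N : ℕ, ∀ n : ℕ, N ≤ n →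
      ∀ A : Set (Fin n → F), cq ^ n < (A.ncard : ℝ) →
        ∃ x : Fin d → (Fin n → F), (∀ i, x i ∈ A) ∧ Function.Injective x ∧
          ∑ i, a i • x i = 0 := by
  classical
  obtain ⟨c, -, hc, N, hN⟩ := hasSol_main (F := F) d (Fin d) (by simp) (by omega) a ha hsum
  refine ⟨c, hc, N, fun n hn A hA => ?_⟩
  obtain ⟨x, hx, h⟩ := hN n hn A.toFinset (by rwa [← Set.ncard_eq_toFinset_card'])
  exact ⟨x, fun i => by simpa using hx i, h⟩
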